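/- Let ξ ∈ 𝔽_q((z⁻¹)) be an irrational power series. For every θ ∈ 𝔽_q((z⁻¹)) not belonging to 𝔽_q[z] + ξ𝔽_q[z], one has 1/ω((ξ)) ≤ ω̂((ξ), θ) ≤ ω((ξ)). -/

import Mathlib

/-!
Common setup: the field `𝔽_q((z⁻¹))` of formal power series over a finite field `K` of
cardinality `q`, modeled as the field `FF K` of formal Laurent series in `t = z⁻¹`,
together with its non-Archimedean norm, the embedding of the polynomial ring `𝔽_q[z]`,
distances to polynomial (vectors), Diophantine exponents, `Bad` sets, continued fractions
and best approximation sequences.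
-/

open scoped Classical ENNReal NNReal
open Filter

noncomputable section

namespace FPSDA

variable (K : Type*) [Field K] [Fintype K]

/-- The field `𝔽_q((z⁻¹))` of formal power series in `z⁻¹` over the finite field `K = 𝔽_q`,
modeled as the field of formal Laurent series in the variable `t = z⁻¹`. -/
def FF : Type _ := LaurentSeries K

instance : Field (FF K) := inferInstanceAs (Field (LaurentSeries K))

variable {K}

/-- The identity map, viewing an element of `𝔽_q((z⁻¹))` as a Laurent series in `t = z⁻¹`. -/
def toL (x : FF K) : LaurentSeries K := x

@[simp] lemma toL_zero : toL (0 : FF K) = 0 := rfl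
@[simp] lemma toL_add (x y : FF K) : toL (x + y) = toL x + toL y := rfl
@[simp] lemma toL_neg (x : FF K) : toL (-x) = -toL x := rfl
@[simp] lemma toL_sub (x y : FF K) : toL (x - y) = toL x - toL y := rfl
lemma toL_eq_zero {x : FF K} : toL x = 0 ↔ x = 0 := Iff.rfl

/-- The norm `‖x‖ = q ^ (deg x)` on `𝔽_q((z⁻¹))`, where
`deg x = - (order of x as a Laurent series in z⁻¹)`; `‖0‖ = 0`. -/
def fnorm (x : FF K) : ℝ :=
  if toL x = 0 then 0 else (Fintype.card K : ℝ) ^ (-(toL x).order)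

lemma one_le_q : (1 : ℝ) ≤ (Fintype.card K : ℝ) := by
  exact_mod_cast Fintype.card_pos

lemma fnorm_nonneg (x : FF K) : 0 ≤ fnorm x := by
  unfold fnorm
  split_ifs
  · exact le_refl 0
  · exact zpow_nonneg (by positivity) _

lemma fnorm_eq_zero {x : FF K} : fnorm x = 0 ↔ x = 0 := by
  unfold fnorm
  split_ifs with h
  · exact ⟨fun _ => toL_eq_zero.mp h, fun _ => rfl⟩
  · constructor
    · intro hc
      exact absurd hc (zpow_ne_zero _ (by
        have h0 : (0:ℝ) < (Fintype.card K : ℝ) := by positivity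
        exact ne_of_gt h0))
    · intro hc
      exact absurd (toL_eq_zero.mpr hc) h

lemma fnorm_neg (x : FF K) : fnorm (-x) = fnorm x := by
  unfold fnorm
  rw [toL_neg]
  simp [neg_eq_zero, HahnSeries.order_neg]

lemma fnorm_add_le (x y : FF K) : fnorm (x + y) ≤ max (fnorm x) (fnorm y) := by
  by_cases hxy : x + y = 0
  · rw [fnorm_eq_zero.mpr hxy]
    exact le_max_of_le_left (fnorm_nonneg x)
  by_cases hx : x = 0
  · rw [hx, zero_add]
    exact le_max_right _ _
  by_cases hy : y = 0
  · rw [hy, add_zero]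
    exact le_max_left _ _
  have horder : min (toL x).order (toL y).order ≤ (toL (x + y)).order := by
    rw [toL_add]
    exact HahnSeries.min_order_le_order_add (show toL x + toL y ≠ 0 from hxy)
  have h1 : fnorm (x + y) = (Fintype.card K : ℝ) ^ (-(toL (x+y)).order) := by
    unfold fnorm
    rw [if_neg (show toL (x + y) ≠ 0 from hxy)]
  rcases le_total (toL x).order (toL y).order with h | h
  · have h2 : (toL x).order ≤ (toL (x+y)).order := le_trans (by simp [min_eq_left h]) horder
    refine le_max_of_le_left ?_
    rw [h1]
    unfold fnorm
    rw [if_neg (show toL x ≠ 0 from hx)]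
    exact zpow_le_zpow_right₀ one_le_q (by omega)
  · have h2 : (toL y).order ≤ (toL (x+y)).order := le_trans (by simp [min_eq_right h]) horder
    refine le_max_of_le_right ?_
    rw [h1]
    unfold fnorm
    rw [if_neg (show toL y ≠ 0 from hy)]
    exact zpow_le_zpow_right₀ one_le_q (by omega)

/-- The (ultra)metric `dist x y = ‖x - y‖` on `𝔽_q((z⁻¹))`. -/
instance : MetricSpace (FF K) where
  dist x y := fnorm (x - y)
  dist_self x := by
    show fnorm (x - x) = 0
    rw [sub_self]
    exact fnorm_eq_zero.mpr rfl
  dist_comm x y := by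
    show fnorm (x - y) = fnorm (y - x)
    have h : x - y = -(y - x) := by ring
    rw [h, fnorm_neg]
  dist_triangle x y z := by
    show fnorm (x - z) ≤ fnorm (x - y) + fnorm (y - z)
    have h : x - z = (x - y) + (y - z) := by ring
    calc fnorm (x - z) ≤ max (fnorm (x - y)) (fnorm (y - z)) := by
          rw [h]; exact fnorm_add_le _ _
      _ ≤ fnorm (x - y) + fnorm (y - z) :=
        max_le (le_add_of_nonneg_right (fnorm_nonneg _)) (le_add_of_nonneg_left (fnorm_nonneg _))
  eq_of_dist_eq_zero := by
    intro x y h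
    have h' : x - y = 0 := fnorm_eq_zero.mp h
    exact sub_eq_zero.mp h'

instance : MeasurableSpace (FF K) := borel _
instance : BorelSpace (FF K) := ⟨rfl⟩

/-- The canonical embedding of the polynomial ring `𝔽_q[z]` into `𝔽_q((z⁻¹))`:
the variable `z` is sent to `t⁻¹ = single (-1) 1`. -/
def polyF (P : Polynomial K) : FF K :=
  Polynomial.aeval (HahnSeries.single (-1 : ℤ) (1 : K)) P

/-- Supremum norm of a vector with entries in `𝔽_q((z⁻¹))`. -/
def vnorm {ι : Type*} [Fintype ι] (v : ι → FF K) : ℝ := ⨆ i, fnorm (v i)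

/-- `⟨v⟩`, the distance from the vector `v` to the nearest polynomial vector. -/
def vdist {ι : Type*} [Fintype ι] (v : ι → FF K) : ℝ :=
  ⨅ y : ι → Polynomial K, vnorm (fun i => v i - polyF (y i))

/-- `⟨x⟩`, the distance from the scalar `x` to the nearest polynomial. -/
def sdist (x : FF K) : ℝ := ⨅ y : Polynomial K, fnorm (x - polyF y)

/-- The fractional part `{x} = Σ_{i ≥ 1} a_i z^{-i}` of `x = Σ_i a_i z^{-i}`. -/
def fracPart (x : FF K) : FF K :=
  (⟨fun i => if 1 ≤ i then (toL x).coeff i else 0, (toL x).isPWO_support'.mono (by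
      intro i hi
      by_cases h : (1:ℤ) ≤ i
      · simpa [Function.mem_support, h] using hi
      · simp [Function.mem_support, h] at hi)⟩ : LaurentSeries K)

/-- The integer part `[x] = Σ_{i ≤ 0} a_i z^{-i}` of `x = Σ_i a_i z^{-i}`, as a polynomial
in `z`. -/
def intPoly (x : FF K) : Polynomial K :=
  ∑ i ∈ Finset.range ((-(toL x).order).toNat + 1),
    Polynomial.monomial i ((toL x).coeff (-(i : ℤ)))

/-- `x ∈ 𝔽_q((z⁻¹))` is irrational if it is not in `𝔽_q(z)`, i.e. is not a ratio of two
polynomials in `z`. -/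
def FIrrational (x : FF K) : Prop :=
  ∀ P Q : Polynomial K, Q ≠ 0 → x * polyF Q ≠ polyF P

section Exponents

variable {m n : ℕ}

/-- The norm `‖x‖ = max_j ‖x_j‖` of a polynomial vector `x`. -/
def pnorm {ι : Type*} [Fintype ι] (x : ι → Polynomial K) : ℝ :=
  vnorm (fun i => (polyF (x i) : FF K))

/-- The system `⟨A x - θ⟩ ≤ H^{-ω}`, `‖x‖ ≤ H` has a polynomial solution `x`. -/
def Solv (A : Matrix (Fin n) (Fin m) (FF K)) (θ : Fin n → FF K) (ω H : ℝ) : Prop :=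
  ∃ x : Fin m → Polynomial K,
    vdist (A.mulVec (fun j => polyF (x j)) - θ) ≤ H ^ (-ω) ∧ pnorm x ≤ H

/-- The system `⟨A x⟩ ≤ H^{-ω}`, `‖x‖ ≤ H` has a nonzero polynomial solution `x`. -/
def SolvHom (A : Matrix (Fin n) (Fin m) (FF K)) (ω H : ℝ) : Prop :=
  ∃ x : Fin m → Polynomial K, x ≠ 0 ∧
    vdist (A.mulVec (fun j => polyF (x j))) ≤ H ^ (-ω) ∧ pnorm x ≤ H

/-- The inhomogeneous exponent `ω(A, θ)`: the supremum (in `[0,∞]`) of all `ω` such that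
for arbitrarily large `H` the system `⟨A x - θ⟩ ≤ H^{-ω}`, `‖x‖ ≤ H` has a polynomial
solution. -/
def omegaInhom (A : Matrix (Fin n) (Fin m) (FF K)) (θ : Fin n → FF K) : ℝ≥0∞ :=
  ⨆ (ω : ℝ) (_ : ∀ H₀ : ℝ, ∃ H : ℝ, H₀ ≤ H ∧ Solv A θ ω H), ENNReal.ofReal ω

/-- The uniform inhomogeneous exponent `ω̂(A, θ)`: as `ω(A, θ)`, but with a solution for
all sufficiently large `H`. -/
def omegaHatInhom (A : Matrix (Fin n) (Fin m) (FF K)) (θ : Fin n → FF K) : ℝ≥0∞ :=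
  ⨆ (ω : ℝ) (_ : ∃ H₀ : ℝ, ∀ H : ℝ, H₀ ≤ H → Solv A θ ω H), ENNReal.ofReal ω

/-- The homogeneous exponent `ω(A)`. -/
def omegaHom (A : Matrix (Fin n) (Fin m) (FF K)) : ℝ≥0∞ :=
  ⨆ (ω : ℝ) (_ : ∀ H₀ : ℝ, ∃ H : ℝ, H₀ ≤ H ∧ SolvHom A ω H), ENNReal.ofReal ω

/-- The uniform homogeneous exponent `ω̂(A)`. -/
def omegaHatHom (A : Matrix (Fin n) (Fin m) (FF K)) : ℝ≥0∞ :=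
  ⨆ (ω : ℝ) (_ : ∃ H₀ : ℝ, ∀ H : ℝ, H₀ ≤ H → SolvHom A ω H), ENNReal.ofReal ω

/-- `A` is non-degenerate: the `𝔽_q[z]`-module `Aᵀ 𝔽_q[z]ⁿ + 𝔽_q[z]^m ⊆ 𝔽_q((z⁻¹))^m` has
rank `m + n` over `𝔽_q[z]`, i.e. its `m + n` natural generators are linearly independent
over `𝔽_q[z]`; equivalently, no nonzero polynomial vector `u` makes `Aᵀ u` a polynomial
vector. -/
def Nondegenerate (A : Matrix (Fin n) (Fin m) (FF K)) : Prop :=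
  ∀ u : Fin n → Polynomial K,
    (∃ v : Fin m → Polynomial K,
      A.transpose.mulVec (fun i => polyF (u i)) = fun j => polyF (v j)) → u = 0

/-- `liminf_{x ∈ 𝔽_q[z]^m, ‖x‖ → ∞} ‖x‖^{m/n} ⟨A x - θ⟩`, computed in `[0, ∞]`. -/
def badLiminf (A : Matrix (Fin n) (Fin m) (FF K)) (θ : Fin n → FF K) : ℝ≥0∞ :=
  Filter.liminf
    (fun x : Fin m → Polynomial K =>
      ENNReal.ofReal ((pnorm x) ^ ((m : ℝ) / (n : ℝ)) *
        vdist (A.mulVec (fun j => polyF (x j)) - θ)))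
    (Filter.comap (fun x : Fin m → Polynomial K => pnorm x) Filter.atTop)

/-- The set `Bad^ε(A)` of `θ` in the unit polydisc `𝕀ⁿ` with
`liminf_{‖x‖ → ∞} ‖x‖^{m/n} ⟨A x - θ⟩ ≥ ε`. -/
def Bad (A : Matrix (Fin n) (Fin m) (FF K)) (ε : ℝ) : Set (Fin n → FF K) :=
  {θ | (∀ i, fnorm (θ i) < 1) ∧ ENNReal.ofReal ε ≤ badLiminf A θ}

/-- The set `Bad(A) = ⋃_{ε > 0} Bad^ε(A)`. -/
def BadAll (A : Matrix (Fin n) (Fin m) (FF K)) : Set (Fin n → FF K) :=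
  ⋃ (ε : ℝ) (_ : 0 < ε), Bad A ε

/-- `M(y) = ⟨Aᵀ y⟩` for a polynomial vector `y`. -/
def Mfun (A : Matrix (Fin n) (Fin m) (FF K)) (y : Fin n → Polynomial K) : ℝ :=
  vdist (A.transpose.mulVec (fun i => polyF (y i)))

/-- `y 1, y 2, …` is a sequence of best approximations related to `Aᵀ`:
`1 = Y_1 < Y_2 < ⋯`, `M_1 > M_2 > ⋯`, and `M(x) ≥ M_k` for every nonzero polynomial
vector `x` with `‖x‖ < Y_{k+1}` (the value `y 0` is irrelevant). -/
def IsBestApproxSeq (A : Matrix (Fin n) (Fin m) (FF K))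
    (y : ℕ → Fin n → Polynomial K) : Prop :=
  pnorm (y 1) = 1 ∧
  (∀ k, 1 ≤ k → pnorm (y k) < pnorm (y (k + 1))) ∧
  (∀ k, 1 ≤ k → Mfun A (y (k + 1)) < Mfun A (y k)) ∧
  (∀ k, 1 ≤ k → ∀ x : Fin n → Polynomial K, x ≠ 0 → pnorm x < pnorm (y (k + 1)) →
    Mfun A (y k) ≤ Mfun A x)

end Exponents

section Scalar

/-- The system `⟨ξ x - θ⟩ ≤ H^{-ω}`, `‖x‖ ≤ H` has a polynomial solution `x`. -/
def sSolv (ξ θ : FF K) (ω H : ℝ) : Prop :=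
  ∃ x : Polynomial K, sdist (ξ * polyF x - θ) ≤ H ^ (-ω) ∧ fnorm (polyF x) ≤ H

/-- The scalar inhomogeneous exponent `ω((ξ), θ)`. -/
def somegaInhom (ξ θ : FF K) : ℝ≥0∞ :=
  ⨆ (ω : ℝ) (_ : ∀ H₀ : ℝ, ∃ H : ℝ, H₀ ≤ H ∧ sSolv ξ θ ω H), ENNReal.ofReal ω

/-- The scalar uniform inhomogeneous exponent `ω̂((ξ), θ)`. -/
def somegaHatInhom (ξ θ : FF K) : ℝ≥0∞ :=
  ⨆ (ω : ℝ) (_ : ∃ H₀ : ℝ, ∀ H : ℝ, H₀ ≤ H → sSolv ξ θ ω H), ENNReal.ofReal ω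

/-- The scalar homogeneous exponent `ω((ξ))`. -/
def somegaHom (ξ : FF K) : ℝ≥0∞ :=
  ⨆ (ω : ℝ) (_ : ∀ H₀ : ℝ, ∃ H : ℝ, H₀ ≤ H ∧ ∃ x : Polynomial K, x ≠ 0 ∧
      sdist (ξ * polyF x) ≤ H ^ (-ω) ∧ fnorm (polyF x) ≤ H), ENNReal.ofReal ω

/-- `liminf_{x ∈ 𝔽_q[z], ‖x‖ → ∞} ‖x‖ ⟨α x - θ⟩`, computed in `[0, ∞]`. -/
def sBadLiminf (α θ : FF K) : ℝ≥0∞ :=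
  Filter.liminf
    (fun x : Polynomial K => ENNReal.ofReal (fnorm (polyF x) * sdist (α * polyF x - θ)))
    (Filter.comap (fun x : Polynomial K => fnorm (polyF x)) Filter.atTop)

/-- The set `Bad^ε(α)` of `θ ∈ 𝕀` with `liminf_{‖x‖ → ∞} ‖x‖ ⟨α x - θ⟩ ≥ ε`. -/
def sBad (α : FF K) (ε : ℝ) : Set (FF K) :=
  {θ | fnorm θ < 1 ∧ ENNReal.ofReal ε ≤ sBadLiminf α θ}

end Scalar

section CF

/-- The Gauss map `T x = 1/x - [1/x]` on `𝔽_q((z⁻¹))`. -/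
def gaussMap (x : FF K) : FF K := fracPart x⁻¹

/-- `pquot α k` is the `(k+1)`-st partial quotient `A_{k+1} = [1 / T^k α]` of the
continued fraction expansion of `α`. -/
def pquot (α : FF K) (k : ℕ) : Polynomial K := intPoly ((gaussMap^[k] α)⁻¹)

/-- `cfQ α k` is the denominator `Q_k` of the `k`-th convergent of the continued fraction
expansion of `α`: `Q_0 = 1`, `Q_1 = A_1`, `Q_{k+2} = A_{k+2} Q_{k+1} + Q_k`. -/
def cfQ (α : FF K) : ℕ → Polynomial K
  | 0 => 1
  | 1 => pquot α 0
  | (k + 2) => pquot α (k + 1) * cfQ α (k + 1) + cfQ α k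

/-- `α` is singular on average: for every `c > 0` the proportion of `l ∈ {1, …, N}` for
which `‖{Q α}‖ ≤ c 2^{-l}` has a solution `Q ∈ 𝔽_q[z]` with `0 < ‖Q‖ ≤ 2^l` tends to `1`
as `N → ∞`. -/
def SingularOnAverage (α : FF K) : Prop :=
  ∀ c : ℝ, 0 < c →
    Filter.Tendsto
      (fun N : ℕ =>
        (((Finset.Icc 1 N).filter (fun l : ℕ =>
            ∃ Q : Polynomial K, Q ≠ 0 ∧ fnorm (polyF Q) ≤ 2 ^ l ∧
              fnorm (fracPart (polyF Q * α)) ≤ c / 2 ^ l)).card : ℝ) / (N : ℝ))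
      Filter.atTop (nhds 1)

end CF

end FPSDA

open FPSDA MeasureTheory

/-!
Comparing Laurent coefficients, `⟨ξ P⟩` is small when the coefficient vector of `P` is annihilated
by a Hankel matrix of coefficients of `ξ`, and `⟨ξ P - θ⟩` is small when that vector solves a linear
system whose matrix is the transposed Hankel matrix. As a matrix with trivial kernel has a
surjective transpose, for all `X, Y ≥ 1` either `⟨ξ P⟩ ≤ X⁻¹`, `‖P‖ ≤ Y` has a nonzero solution, or
`⟨ξ P - θ⟩ ≤ Y⁻¹`, `‖P‖ ≤ X` has a solution for every `θ`. Taking `X = H` and `Y = H ^ ω⁻¹` gives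
the lower bound. For the upper bound, `⟨ξ P - θ⟩` is never `0`, so a solution `P` of the
inhomogeneous system stops being one at a finite height `H`; a solution `Q` at height `2 H` is then
different from `P`, and `P - Q` solves the homogeneous system.
-/

namespace FPSDA

open Polynomial Matrix

lemma transpose_mulVec_surjective_of_mulVec_injective {F m n : Type*} [Field F] [Fintype m]
    [Fintype n] {A : Matrix m n F} (hA : Function.Injective A.mulVec) :
    Function.Surjective Aᵀ.mulVec := by
  obtain ⟨g, hg⟩ := A.mulVecLin.exists_leftInverse_of_injective (LinearMap.ker_eq_bot.2 hA)
  have hleft : ∃ B : Matrix n m F, B * A = 1 := by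
    refine ⟨LinearMap.toMatrix' g, toLin'.injective ?_⟩
    rw [toLin'_mul, toLin'_toMatrix', toLin'_apply', hg, toLin'_one]
  have hvec : Aᵀ.mulVec = fun v => v ᵥ* A := funext (mulVec_transpose A)
  exact hvec ▸ vecMul_surjective_iff_exists_left_inverse.2 hleft

lemma eventually_div_rpow_neg_le_rpow_neg {a b c : ℝ} (hc : 0 < c) (hab : a < b) :
    ∀ᶠ H : ℝ in atTop, (H / c) ^ (-b) ≤ H ^ (-a) := by
  filter_upwards [(tendsto_rpow_atTop (sub_pos.2 hab)).eventually_ge_atTop (c ^ b),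
    eventually_gt_atTop 0] with H hH hpos
  calc (H / c) ^ (-b) = H ^ (-b) * c ^ b := by
        rw [Real.div_rpow hpos.le hc.le, Real.rpow_neg hc.le, div_inv_eq_mul]
    _ ≤ H ^ (-b) * H ^ (b - a) := by gcongr
    _ = H ^ (-a) := by rw [← Real.rpow_add hpos]; congr 1; ring

section Coefficients

variable {K : Type*} [Field K]

lemma ext_coeff {x y : FF K} (h : ∀ i, (toL x).coeff i = (toL y).coeff i) : x = y :=
  HahnSeries.ext (funext h)

lemma coeff_toL_add (x y : FF K) (i : ℤ) :
    (toL (x + y)).coeff i = (toL x).coeff i + (toL y).coeff i := rfl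

lemma coeff_toL_sub (x y : FF K) (i : ℤ) :
    (toL (x - y)).coeff i = (toL x).coeff i - (toL y).coeff i :=
  HahnSeries.coeff_sub

lemma polyF_add (P Q : K[X]) : (polyF (P + Q) : FF K) = polyF P + polyF Q :=
  map_add (aeval (R := K) (HahnSeries.single (-1 : ℤ) (1 : K))) P Q

lemma polyF_neg (P : K[X]) : (polyF (-P) : FF K) = -polyF P :=
  map_neg (aeval (R := K) (HahnSeries.single (-1 : ℤ) (1 : K))) P

lemma polyF_sub (P Q : K[X]) : (polyF (P - Q) : FF K) = polyF P - polyF Q :=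
  map_sub (aeval (R := K) (HahnSeries.single (-1 : ℤ) (1 : K))) P Q

lemma toL_polyF_monomial (j : ℕ) (a : K) :
    toL (polyF (monomial j a)) = HahnSeries.single (-(j : ℤ)) a := by
  have hC : algebraMap K (LaurentSeries K) a = HahnSeries.C a := HahnSeries.ofPowerSeries_C a
  change aeval (HahnSeries.single (-1 : ℤ) (1 : K) : LaurentSeries K) (monomial j a) = _
  rw [aeval_monomial, hC, HahnSeries.single_pow, HahnSeries.C_apply, HahnSeries.single_mul_single]
  simp only [one_pow, mul_one, zero_add, smul_neg, nsmul_eq_mul]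

lemma coeff_mul_polyF (x : FF K) (P : K[X]) (n : ℤ) :
    (toL (x * polyF P)).coeff n = P.sum fun j a => (toL x).coeff (n + j) * a := by
  induction P using Polynomial.induction_on' with
  | add P Q hP hQ =>
    rw [polyF_add, mul_add, coeff_toL_add, hP, hQ,
      sum_add_index _ _ _ (fun _ => mul_zero _) fun _ _ _ => mul_add _ _ _]
  | monomial j a =>
    have hmul : toL (x * polyF (monomial j a)) = toL x * HahnSeries.single (-(j : ℤ)) a :=
      congrArg (toL x * ·) (toL_polyF_monomial j a)
    rw [hmul, HahnSeries.coeff_mul_single, sub_neg_eq_add,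
      sum_monomial_index a (fun j a => (toL x).coeff (n + j) * a) (mul_zero _)]

lemma coeff_polyF (P : K[X]) (n : ℤ) :
    (toL (polyF P)).coeff n = if n ≤ 0 then P.coeff n.natAbs else 0 := by
  induction P using Polynomial.induction_on' with
  | add P Q hP hQ =>
    rw [polyF_add, coeff_toL_add, hP, hQ, Polynomial.coeff_add, ite_add_ite, add_zero]
  | monomial j a =>
    rw [toL_polyF_monomial, HahnSeries.coeff_single, coeff_monomial]
    split_ifs <;> first | rfl | lia

lemma coeff_fracPart (x : FF K) (i : ℤ) :
    (toL (fracPart x)).coeff i = if 1 ≤ i then (toL x).coeff i else 0 := rfl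

lemma coeff_intPoly (x : FF K) (j : ℕ) : (intPoly x).coeff j = (toL x).coeff (-j) := by
  simp only [intPoly, finsetSum_coeff, coeff_monomial, Finset.sum_ite_eq', Finset.mem_range,
    ite_eq_left_iff, not_lt]
  exact fun hj => (HahnSeries.coeff_eq_zero_of_lt_order (by lia)).symm

lemma sub_polyF_intPoly (x : FF K) : x - polyF (intPoly x) = fracPart x := by
  refine ext_coeff fun i => ?_
  rw [coeff_toL_sub, coeff_polyF, coeff_intPoly, coeff_fracPart]
  split_ifs with h₀ h₁ h₁
  · lia
  · rw [Int.ofNat_natAbs_of_nonpos h₀, neg_neg, sub_self]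
  · exact sub_zero _
  · lia

lemma fracPart_sub (x y : FF K) : fracPart (x - y) = fracPart x - fracPart y := by
  refine ext_coeff fun i => ?_
  simp only [coeff_toL_sub, coeff_fracPart]
  split_ifs
  · rfl
  · exact (sub_zero 0).symm

lemma fracPart_polyF (P : K[X]) : fracPart (polyF P) = 0 := by
  refine ext_coeff fun i => ?_
  rw [coeff_fracPart, coeff_polyF]
  split_ifs <;> first | rfl | lia

/-- The `m × n` Hankel matrix of the coefficients of `z⁻¹, z⁻², …` in `ξ`. Up to the shift of the
row index by one, it sends the coefficients of a polynomial `P` with `deg P < n` to the coefficients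
of `z⁻¹, …, z⁻ᵐ` in `ξ P`. -/
def hankel (ξ : FF K) (m n : ℕ) : Matrix (Fin m) (Fin n) K :=
  Matrix.of fun i j => (toL ξ).coeff ((i : ℕ) + 1 + (j : ℕ))

lemma transpose_hankel (ξ : FF K) (m n : ℕ) : (hankel ξ m n)ᵀ = hankel ξ n m := by
  ext i j
  simp only [hankel, transpose_apply, of_apply, add_right_comm, add_comm (i : ℤ)]

lemma hankel_mulVec_degreeLTEquiv (ξ : FF K) (m : ℕ) {n : ℕ} (P : degreeLT K n) (i : Fin m) :
    (hankel ξ m n *ᵥ degreeLTEquiv K n P) i = (toL (ξ * polyF P)).coeff ((i : ℕ) + 1) := by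
  rw [coeff_mul_polyF, ← sum_fin _ (fun _ => mul_zero _) (mem_degreeLT.1 P.2)]
  rfl

end Coefficients

section Exponents

variable {K : Type*} [Field K] [Fintype K]

lemma one_lt_q : (1 : ℝ) < Fintype.card K := mod_cast Fintype.one_lt_card

lemma fnorm_sub_le (x y : FF K) : fnorm (x - y) ≤ max (fnorm x) (fnorm y) := by
  simpa only [sub_eq_add_neg, fnorm_neg] using fnorm_add_le x (-y)

lemma fnorm_le_zpow_iff {x : FF K} {n : ℤ} :
    fnorm x ≤ (Fintype.card K : ℝ) ^ (-n) ↔ ∀ i < n, (toL x).coeff i = 0 := by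
  by_cases hx : toL x = 0
  · simp only [fnorm, hx, if_true, HahnSeries.coeff_zero, implies_true, iff_true]
    positivity
  · rw [fnorm, if_neg hx, zpow_le_zpow_iff_right₀ one_lt_q, neg_le_neg_iff]
    refine ⟨fun h i hi => HahnSeries.coeff_eq_zero_of_lt_order (hi.trans_le h), fun h => ?_⟩
    exact not_lt.1 fun hlt => hx (HahnSeries.coeff_order_eq_zero.1 (h _ hlt))

lemma fnorm_le_fnorm_of_coeff_eq_zero {x y : FF K}
    (h : ∀ i, (toL x).coeff i = 0 → (toL y).coeff i = 0) : fnorm y ≤ fnorm x := by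
  by_cases hx : toL x = 0
  · have hy : y = 0 := ext_coeff fun i => h i (by rw [hx, HahnSeries.coeff_zero])
    rw [fnorm_eq_zero.2 hy]
    exact fnorm_nonneg x
  · have hnorm : fnorm x = (Fintype.card K : ℝ) ^ (-(toL x).order) := if_neg hx
    rw [hnorm, fnorm_le_zpow_iff]
    exact fun i hi => h i (HahnSeries.coeff_eq_zero_of_lt_order hi)

lemma fnorm_polyF_le_of_mem_degreeLT {P : K[X]} {n : ℕ} (hP : P ∈ degreeLT K (n + 1)) :
    fnorm (polyF P) ≤ (Fintype.card K : ℝ) ^ n := by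
  rw [← zpow_natCast, ← neg_neg (n : ℤ), fnorm_le_zpow_iff]
  intro i hi
  rw [coeff_polyF, if_pos (by lia),
    (degree_lt_iff_coeff_zero P (n + 1)).1 (mem_degreeLT.1 hP) _ (by lia)]

lemma fnorm_fracPart_le (x : FF K) : fnorm (fracPart x) ≤ fnorm x :=
  fnorm_le_fnorm_of_coeff_eq_zero fun i hi => by rw [coeff_fracPart, hi, ite_self]

lemma sdist_eq_fnorm_fracPart (x : FF K) : sdist x = fnorm (fracPart x) := by
  refine le_antisymm ?_ (le_ciInf fun P => ?_)
  · rw [← sub_polyF_intPoly]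
    exact ciInf_le ⟨0, Set.forall_mem_range.2 fun P => fnorm_nonneg (x - polyF P)⟩ (intPoly x)
  · calc fnorm (fracPart x) = fnorm (fracPart (x - polyF P)) := by
          rw [fracPart_sub, fracPart_polyF, sub_zero]
      _ ≤ fnorm (x - polyF P) := fnorm_fracPart_le _

lemma sdist_sub_le (x y : FF K) : sdist (x - y) ≤ max (sdist x) (sdist y) := by
  simpa only [sdist_eq_fnorm_fracPart, fracPart_sub] using fnorm_sub_le (fracPart x) (fracPart y)

lemma sdist_pos {x : FF K} (hx : ∀ P : K[X], x ≠ polyF P) : 0 < sdist x := by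
  rw [sdist_eq_fnorm_fracPart, ← sub_polyF_intPoly]
  exact (fnorm_nonneg _).lt_of_ne' fun h => hx _ (sub_eq_zero.1 (fnorm_eq_zero.1 h))

lemma sdist_le_of_coeff_eq_zero {x : FF K} {n : ℕ}
    (hx : ∀ i : Fin n, (toL x).coeff ((i : ℕ) + 1) = 0) :
    sdist x ≤ ((Fintype.card K : ℝ) ^ (n + 1))⁻¹ := by
  rw [sdist_eq_fnorm_fracPart, ← zpow_natCast, ← _root_.zpow_neg, fnorm_le_zpow_iff]
  intro i hi
  rw [coeff_fracPart]
  split_ifs with h₁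
  · have hcast : ((i - 1).toNat : ℤ) + 1 = i := by lia
    exact hcast ▸ hx ⟨(i - 1).toNat, by lia⟩
  · rfl

lemma exists_degreeLT_sdist_mul_le_or_forall_exists_degreeLT (ξ : FF K) (m n : ℕ) :
    (∃ P ∈ degreeLT K n, P ≠ 0 ∧ sdist (ξ * polyF P) ≤ ((Fintype.card K : ℝ) ^ (m + 1))⁻¹) ∨
      ∀ θ, ∃ P ∈ degreeLT K m,
        sdist (ξ * polyF P - θ) ≤ ((Fintype.card K : ℝ) ^ (n + 1))⁻¹ := by
  by_cases hinj : Function.Injective (hankel ξ m n).mulVec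
  · right
    intro θ
    obtain ⟨v, hv⟩ := transpose_mulVec_surjective_of_mulVec_injective hinj
      fun i => (toL θ).coeff ((i : ℕ) + 1)
    obtain ⟨P, rfl⟩ := (degreeLTEquiv K m).surjective v
    refine ⟨P, P.2, sdist_le_of_coeff_eq_zero fun i => ?_⟩
    rw [coeff_toL_sub, ← hankel_mulVec_degreeLTEquiv, ← transpose_hankel, congrFun hv i, sub_self]
  · left
    obtain ⟨v, hv, hne⟩ : ∃ v, hankel ξ m n *ᵥ v = 0 ∧ v ≠ 0 := by
      simpa using mt (injective_iff_map_eq_zero (hankel ξ m n).mulVecLin).2 hinj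
    obtain ⟨P, rfl⟩ := (degreeLTEquiv K n).surjective v
    refine ⟨P, P.2, fun hP => hne ?_, sdist_le_of_coeff_eq_zero fun i => ?_⟩
    · rw [(Subtype.ext hP : P = 0), map_zero]
    · rw [← hankel_mulVec_degreeLTEquiv, hv, Pi.zero_apply]

theorem exists_sdist_mul_le_or_exists_sdist_mul_sub_le (ξ θ : FF K) {X Y : ℝ} (hX : 1 ≤ X)
    (hY : 1 ≤ Y) :
    (∃ P ≠ 0, sdist (ξ * polyF P) ≤ X⁻¹ ∧ fnorm (polyF P : FF K) ≤ Y) ∨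
      ∃ P, sdist (ξ * polyF P - θ) ≤ Y⁻¹ ∧ fnorm (polyF P : FF K) ≤ X := by
  obtain ⟨m, hmX, hXm⟩ := exists_nat_pow_near hX (one_lt_q (K := K))
  obtain ⟨n, hnY, hYn⟩ := exists_nat_pow_near hY (one_lt_q (K := K))
  have inv_le {Z : ℝ} {k : ℕ} (hZ : 1 ≤ Z) (hk : Z < (Fintype.card K : ℝ) ^ (k + 1)) :
      ((Fintype.card K : ℝ) ^ (k + 1 + 1))⁻¹ ≤ Z⁻¹ :=
    inv_anti₀ (by positivity) (hk.le.trans (pow_le_pow_right₀ one_le_q (Nat.le_succ _)))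
  refine (exists_degreeLT_sdist_mul_le_or_forall_exists_degreeLT ξ (m + 1) (n + 1)).imp ?_ ?_
  · rintro ⟨P, hdeg, hP, hdist⟩
    exact ⟨P, hP, hdist.trans (inv_le hX hXm), (fnorm_polyF_le_of_mem_degreeLT hdeg).trans hnY⟩
  · intro h
    obtain ⟨P, hdeg, hdist⟩ := h θ
    exact ⟨P, hdist.trans (inv_le hY hYn),
      (fnorm_polyF_le_of_mem_degreeLT hdeg).trans hmX⟩

/-- The system `⟨ξ P⟩ ≤ H^{-ω}`, `‖P‖ ≤ H` has a nonzero polynomial solution `P`: the homogeneous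
counterpart of `sSolv`, whose values of `ω` at arbitrarily large `H` define `somegaHom ξ`. -/
def sSolvHom (ξ : FF K) (ω H : ℝ) : Prop :=
  ∃ P : K[X], P ≠ 0 ∧ sdist (ξ * polyF P) ≤ H ^ (-ω) ∧ fnorm (polyF P) ≤ H

lemma ofReal_le_somegaHom {ξ : FF K} {ω : ℝ} (h : ∃ᶠ H in atTop, sSolvHom ξ ω H) :
    ENNReal.ofReal ω ≤ somegaHom ξ :=
  le_iSup₂_of_le ω (frequently_atTop.1 h) le_rfl

lemma ofReal_le_somegaHatInhom {ξ θ : FF K} {ω : ℝ} (h : ∀ᶠ H in atTop, sSolv ξ θ ω H) :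
    ENNReal.ofReal ω ≤ somegaHatInhom ξ θ :=
  le_iSup₂_of_le ω (eventually_atTop.1 h) le_rfl

lemma eventually_sSolv_inv_of_eventually_not_sSolvHom {ξ : FF K} (θ : FF K) {ω : ℝ} (hω : 0 < ω)
    (h : ∀ᶠ H in atTop, ¬ sSolvHom ξ ω H) : ∀ᶠ H in atTop, sSolv ξ θ ω⁻¹ H := by
  filter_upwards [(tendsto_rpow_atTop (inv_pos.2 hω)).eventually h, eventually_ge_atTop 1]
    with H hhom hH
  have hH₀ : 0 ≤ H := zero_le_one.trans hH
  have hpow : (H ^ ω⁻¹) ^ (-ω) = H⁻¹ := by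
    rw [Real.rpow_neg (Real.rpow_nonneg hH₀ _), Real.rpow_inv_rpow hH₀ hω.ne']
  rw [sSolvHom, hpow] at hhom
  rw [sSolv, Real.rpow_neg hH₀]
  exact (exists_sdist_mul_le_or_exists_sdist_mul_sub_le ξ θ hH
    (Real.one_le_rpow hH (inv_pos.2 hω).le)).resolve_left hhom

theorem inv_somegaHom_le_somegaHatInhom (ξ θ : FF K) :
    (somegaHom ξ)⁻¹ ≤ somegaHatInhom ξ θ := by
  refine ENNReal.le_of_forall_nnreal_lt fun r hr => ?_
  obtain rfl | hr₀ := eq_zero_or_pos r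
  · exact zero_le
  have hlt : somegaHom ξ < ENNReal.ofReal (r : ℝ)⁻¹ := by
    rwa [ENNReal.ofReal_inv_of_pos (NNReal.coe_pos.2 hr₀), ENNReal.ofReal_coe_nnreal,
      ENNReal.lt_inv_iff_lt_inv]
  have hhom : ∀ᶠ H in atTop, ¬ sSolvHom ξ (r : ℝ)⁻¹ H :=
    not_frequently.1 fun h => (ofReal_le_somegaHom h).not_gt hlt
  have hinhom := eventually_sSolv_inv_of_eventually_not_sSolvHom θ (inv_pos.2 hr₀) hhom
  rw [inv_inv] at hinhom
  exact ENNReal.ofReal_coe_nnreal.symm.trans_le (ofReal_le_somegaHatInhom hinhom)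

lemma frequently_exists_sdist_mul_le_div_two {ξ θ : FF K}
    (hθ : ¬ ∃ a b : K[X], θ = polyF a + ξ * polyF b) {ω : ℝ} (hω : 0 < ω)
    (h : ∀ᶠ H in atTop, sSolv ξ θ ω H) :
    ∃ᶠ H : ℝ in atTop,
      ∃ P : K[X], P ≠ 0 ∧ sdist (ξ * polyF P) ≤ (H / 2) ^ (-ω) ∧ fnorm (polyF P) ≤ H := by
  obtain ⟨H₀, hsolv⟩ := eventually_atTop.1 h
  refine frequently_atTop.2 fun H₁ => ?_
  obtain ⟨T, hT, hH₀T, hH₁T⟩ : ∃ T, 0 < T ∧ H₀ ≤ T ∧ H₁ ≤ T :=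
    ⟨max 1 (max H₀ H₁), by positivity, by simp, by simp⟩
  obtain ⟨P, hPdist, hPnorm⟩ := hsolv T hH₀T
  have hpos : 0 < sdist (ξ * polyF P - θ) :=
    sdist_pos fun R hR => hθ ⟨-R, P, by rw [polyF_neg, ← hR]; ring⟩
  -- `H` is the largest height at which `P` is still a solution.
  obtain ⟨H, hTH, hHpow⟩ : ∃ H, T ≤ H ∧ H ^ (-ω) = sdist (ξ * polyF P - θ) :=
    ⟨sdist (ξ * polyF P - θ) ^ (-ω)⁻¹,
      (Real.le_rpow_inv_iff_of_neg hT hpos (neg_lt_zero.2 hω)).2 hPdist,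
      Real.rpow_inv_rpow hpos.le (neg_ne_zero.2 hω.ne')⟩
  have hH : 0 < H := hT.trans_le hTH
  have hT2H : T ≤ 2 * H := by linarith
  obtain ⟨Q, hQdist, hQnorm⟩ := hsolv (2 * H) (hH₀T.trans hT2H)
  have hlt : sdist (ξ * polyF Q - θ) < H ^ (-ω) :=
    hQdist.trans_lt (Real.rpow_lt_rpow_of_neg hH (by linarith) (neg_lt_zero.2 hω))
  have hne : P ≠ Q := by
    rintro rfl
    exact hlt.ne hHpow.symm
  have hsub : ξ * polyF (P - Q) = (ξ * polyF P - θ) - (ξ * polyF Q - θ) := by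
    rw [polyF_sub]; ring
  refine ⟨2 * H, hH₁T.trans hT2H, P - Q, sub_ne_zero.2 hne, ?_, ?_⟩
  · rw [hsub, mul_div_cancel_left₀ H two_ne_zero]
    exact (sdist_sub_le _ _).trans (max_le hHpow.ge hlt.le)
  · rw [polyF_sub]
    exact (fnorm_sub_le _ _).trans (max_le (hPnorm.trans hT2H) hQnorm)

theorem somegaHatInhom_le_somegaHom {ξ θ : FF K}
    (hθ : ¬ ∃ a b : K[X], θ = polyF a + ξ * polyF b) : somegaHatInhom ξ θ ≤ somegaHom ξ := by
  refine iSup₂_le fun ω hω => ENNReal.le_of_forall_nnreal_lt fun r hr => ?_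
  have hrω : (r : ℝ) < ω := Real.lt_toNNReal_iff_coe_lt.1 (ENNReal.coe_lt_coe.1 hr)
  have hhom : ∃ᶠ H in atTop, sSolvHom ξ r H :=
    ((frequently_exists_sdist_mul_le_div_two hθ (r.coe_nonneg.trans_lt hrω)
      (eventually_atTop.2 hω)).and_eventually
      (eventually_div_rpow_neg_le_rpow_neg two_pos hrω)).mono
      fun _ ⟨⟨P, hP, hdist, hnorm⟩, hle⟩ => ⟨P, hP, hdist.trans hle, hnorm⟩
  exact ENNReal.ofReal_coe_nnreal.symm.trans_le (ofReal_le_somegaHom hhom)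

theorem somegaHatInhom_bounds_general (ξ θ : FF K)
    (hθ : ¬ ∃ a b : K[X], θ = polyF a + ξ * polyF b) :
    (somegaHom ξ)⁻¹ ≤ somegaHatInhom ξ θ ∧ somegaHatInhom ξ θ ≤ somegaHom ξ :=
  ⟨inv_somegaHom_le_somegaHatInhom ξ θ, somegaHatInhom_le_somegaHom hθ⟩

end Exponents

end FPSDA

/-- For an irrational `ξ` and any `θ` not in `𝔽_q[z] + ξ 𝔽_q[z]`, one has
`1/ω((ξ)) ≤ ω̂((ξ), θ) ≤ ω((ξ))` (with `1/∞ = 0`). -/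
theorem somegaHatInhom_bounds {K : Type*} [Field K] [Fintype K]
    (ξ : FF K) (hirr : FIrrational ξ) (θ : FF K)
    (hθ : ¬ ∃ a b : Polynomial K, θ = polyF a + ξ * polyF b) :
    (somegaHom ξ)⁻¹ ≤ somegaHatInhom ξ θ ∧ somegaHatInhom ξ θ ≤ somegaHom ξ :=
  somegaHatInhom_bounds_general ξ θ hθ
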